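/- Let P be an m×m matrix with non-negative entries which is irreducible. Suppose there exist indices j_0, j_1, …, j_r in {1,…,m} such that (i) for every index k ∈ {1,…,m} there is some i ∈ {0,…,r} with P_{j_i, k} > 0 (the rows j_0,…,j_r jointly cover all columns), and (ii) for each i = 0,…,r−1 there exists an index k with P_{j_i, k} > 0 and P_{j_{i+1}, k} > 0 (consecutive rows overlap). Then P is strictly irreducible. -/

import Mathlib

open Matrix

/-- A matrix with non-negative entries is irreducible if for some `n > 0`
all entries of `A + A² + ⋯ + Aⁿ` are positive. -/
def MatrixIrreducible {m : ℕ} (A : Matrix (Fin m) (Fin m) ℝ) : Prop :=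
  ∃ n : ℕ, 0 < n ∧ ∀ i j : Fin m, 0 < (∑ k ∈ Finset.range n, A ^ (k + 1)) i j

/-!
If two rows of `P` are positive in a common column, the corresponding entry of `P * Pᵀ` is
positive, so paths of overlapping rows are paths in the directed graph of `P * Pᵀ`. The rows
`j 0, …, j r` form such a path, which can be traversed in both directions because overlapping is
symmetric, and every row, having a positive entry, overlaps one of them because they cover all
columns.
-/

open Relation

theorem transGen_nonempty_hom_iff {V : Type*} [Quiver V] {a b : V} :
    TransGen (fun u v : V => Nonempty (u ⟶ v)) a b ↔ ∃ p : Quiver.Path a b, 0 < p.length := by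
  constructor
  · intro h
    induction h with
    | single h => exact ⟨h.some.toPath, Nat.one_pos⟩
    | tail _ h ih => exact ⟨ih.choose.cons h.some, Nat.succ_pos _⟩
  · rintro ⟨p, hp⟩
    induction p with
    | nil => exact absurd hp (lt_irrefl 0)
    | cons p e ih =>
      obtain hp₀ | hp₀ := p.length.eq_zero_or_pos
      · obtain rfl := p.eq_of_length_zero hp₀
        exact .single ⟨e⟩
      · exact (ih hp₀).tail ⟨e⟩

theorem reflTransGen_of_castSucc_succ {α : Type*} {r : α → α → Prop} [Std.Symm r] {N : ℕ}
    {f : Fin (N + 1) → α} (h : ∀ i : Fin N, r (f i.castSucc) (f i.succ)) (i i' : Fin (N + 1)) :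
    ReflTransGen r (f i) (f i') := by
  have h_lt : ∀ ⦃i i'⦄, i < i' → ReflTransGen r (f i) (f i') :=
    (Fin.liftFun_iff_succ (ReflTransGen r)).2 fun i => .single (h i)
  obtain hlt | rfl | hgt := lt_trichotomy i i'
  · exact h_lt hlt
  · exact .refl
  · exact symm (h_lt hgt)

/-- Rows `a` and `b` of `P` overlap if they are both positive in some column. For a matrix with
non-negative entries this is adjacency in the directed graph of `P * Pᵀ`. -/
def RowsOverlap {m n R : Type*} [Zero R] [LT R] (P : Matrix m n R) (a b : m) : Prop :=
  ∃ k, 0 < P a k ∧ 0 < P b k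

instance {m n R : Type*} [Zero R] [LT R] (P : Matrix m n R) : Std.Symm (RowsOverlap P) where
  symm _ _ := fun ⟨k, ha, hb⟩ => ⟨k, hb, ha⟩

theorem RowsOverlap.mul_transpose_apply_pos {m n R : Type*} [Fintype n]
    [Semiring R] [PartialOrder R] [IsStrictOrderedRing R] {P : Matrix m n R}
    (hP : ∀ a k, 0 ≤ P a k) {a b : m} (h : RowsOverlap P a b) : 0 < (P * Pᵀ) a b := by
  obtain ⟨k, ha, hb⟩ := h
  rw [Matrix.mul_apply]
  exact Finset.sum_pos' (fun l _ => mul_nonneg (hP a l) (hP b l))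
    ⟨k, Finset.mem_univ k, mul_pos ha hb⟩

section OrderedRing

variable {m n R : Type*} [Ring R] [LinearOrder R]

theorem isIrreducible_iff_forall_transGen {A : Matrix m m R} (hA : ∀ a b, 0 ≤ A a b) :
    A.IsIrreducible ↔ ∀ a b, TransGen (fun i j => 0 < A i j) a b := by
  let := A.toQuiver
  have hom_iff : (fun i j : m => Nonempty (i ⟶ j)) = fun i j => 0 < A i j := by
    ext i j
    exact nonempty_plift.trans nonempty_prop
  simp only [Matrix.isIrreducible_iff, hA, implies_true, true_and, ← hom_iff,
    transGen_nonempty_hom_iff, Quiver.isSStronglyConnected_iff]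

theorem exists_apply_pos_of_isIrreducible {A : Matrix m m R} (h : A.IsIrreducible) (a : m) :
    ∃ k, 0 < A a k := by
  obtain ⟨k, hk, -⟩ :=
    TransGen.head'_iff.1 ((isIrreducible_iff_forall_transGen h.nonneg).1 h a a)
  exact ⟨k, hk⟩

variable [Fintype n] [IsStrictOrderedRing R]

theorem isIrreducible_mul_transpose_of_transGen {P : Matrix m n R} (hP : ∀ a k, 0 ≤ P a k)
    (h : ∀ a b, TransGen (RowsOverlap P) a b) : (P * Pᵀ).IsIrreducible := by
  have hnonneg (a b : m) : 0 ≤ (P * Pᵀ) a b :=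
    Finset.sum_nonneg fun k _ => mul_nonneg (hP a k) (hP b k)
  exact (isIrreducible_iff_forall_transGen hnonneg).2 fun a b =>
    TransGen.mono (fun _ _ => RowsOverlap.mul_transpose_apply_pos hP) a b (h a b)

theorem strictly_irreducible_of_covering_chain_general {P : Matrix m n R}
    (hP : ∀ a k, 0 ≤ P a k) (hrow : ∀ a, ∃ k, 0 < P a k) {r : ℕ} (j : Fin (r + 1) → m)
    (hcover : ∀ k, ∃ i, 0 < P (j i) k)
    (hchain : ∀ i : Fin r, RowsOverlap P (j i.castSucc) (j i.succ)) :
    (P * Pᵀ).IsIrreducible := by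
  have exists_overlap (a : m) : ∃ i, RowsOverlap P a (j i) := by
    obtain ⟨k, hk⟩ := hrow a
    obtain ⟨i, hi⟩ := hcover k
    exact ⟨i, k, hk, hi⟩
  refine isIrreducible_mul_transpose_of_transGen hP fun a b => ?_
  obtain ⟨i, hi⟩ := exists_overlap a
  obtain ⟨i', hi'⟩ := exists_overlap b
  exact .head' hi ((reflTransGen_of_castSucc_succ hchain i i').tail (symm hi'))

end OrderedRing

theorem matrixIrreducible_iff_isIrreducible {m : ℕ} {A : Matrix (Fin m) (Fin m) ℝ}
    (hA : ∀ a b, 0 ≤ A a b) : MatrixIrreducible A ↔ A.IsIrreducible := by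
  have sum_pos_iff (N : ℕ) (a b : Fin m) :
      0 < (∑ k ∈ Finset.range N, A ^ (k + 1)) a b ↔ ∃ k < N, 0 < (A ^ (k + 1)) a b := by
    simp only [Matrix.sum_apply, Finset.mem_range,
      Finset.sum_pos_iff_of_nonneg fun k _ => Matrix.pow_apply_nonneg hA (k + 1) a b]
  rw [Matrix.isIrreducible_iff_exists_pow_pos hA]
  constructor
  · rintro ⟨N, -, hN⟩ a b
    obtain ⟨k, -, hk⟩ := (sum_pos_iff N a b).1 (hN a b)
    exact ⟨k + 1, k.succ_pos, hk⟩
  · intro h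
    choose e he hpos using h
    obtain ⟨N, hN⟩ := (Set.finite_range fun p : Fin m × Fin m => e p.1 p.2).bddAbove
    refine ⟨N + 1, N.succ_pos, fun a b => (sum_pos_iff _ a b).2 ⟨e a b - 1, ?_, ?_⟩⟩
    · have he_le : e a b ≤ N := hN ⟨(a, b), rfl⟩
      omega
    · rw [Nat.sub_add_cancel (he a b)]
      exact hpos a b

/-- Let `P` be an irreducible `m × m` matrix with non-negative entries.
Suppose there are indices `j 0, …, j r` such that (i) every column contains a positive
entry in one of the rows `j 0, …, j r`, and (ii) consecutive rows `j i`, `j (i+1)`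
have a common column where both are positive.  Then `P` is strictly irreducible. -/
theorem strictly_irreducible_of_covering_chain {m : ℕ}
    (P : Matrix (Fin m) (Fin m) ℝ) (hnonneg : ∀ i j, 0 ≤ P i j)
    (hirr : MatrixIrreducible P)
    (r : ℕ) (j : Fin (r + 1) → Fin m)
    (hcover : ∀ k : Fin m, ∃ i : Fin (r + 1), 0 < P (j i) k)
    (hchain : ∀ i : Fin r, ∃ k : Fin m,
      0 < P (j i.castSucc) k ∧ 0 < P (j i.succ) k) :
    MatrixIrreducible P ∧ MatrixIrreducible (P * Pᵀ) := by
  have hrow := exists_apply_pos_of_isIrreducible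
    ((matrixIrreducible_iff_isIrreducible hnonneg).1 hirr)
  have hmul := strictly_irreducible_of_covering_chain_general hnonneg hrow j hcover hchain
  exact ⟨hirr, (matrixIrreducible_iff_isIrreducible hmul.nonneg).2 hmul⟩
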